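/- Let V be a finite-dimensional real vector space with a nondegenerate alternating bilinear form ω, and let S : V → V be a linear endomorphism with ω(S u, v) = −ω(u, S v) for all u, v ∈ V, and such that ω(S v, v) > 0 for every v ∈ V with S v ≠ 0. Let A ⊆ V be a subspace with A ∩ ker S = {0}. Then for every v₀ ∈ V there exists a unique g ∈ S(A) such that v₀ + g ∈ A^⊥. -/

import Mathlib

/-- The symplectic orthogonal of a subspace `U` with respect to a bilinear form `ω`:
`U^⊥ = {v ∈ V : ω(v,u) = 0 for all u ∈ U}`. -/
def sympOrth {V : Type} [AddCommGroup V] [Module ℝ V]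
    (ω : V →ₗ[ℝ] V →ₗ[ℝ] ℝ) (U : Submodule ℝ V) : Submodule ℝ V where
  carrier := {v | ∀ u ∈ U, ω v u = 0}
  zero_mem' := by intro u hu; simp
  add_mem' := by intro a b ha hb u hu; simp [ha u hu, hb u hu]
  smul_mem' := by intro c a ha u hu; simp [ha u hu]

/-!
Restricting `ω (S a) b` to `a, b ∈ A` gives a bilinear form on `A` with no nonzero isotropic vector,
so, `A` being finite-dimensional, the composite `A → V → Dual A` of `S` with restriction of
functionals `v ↦ ω v` to `A` is bijective. Hence its image `S(A)` in `V` is complementary to the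
kernel `A^⊥` of the second map, and `-g` is the `S(A)`-component of `v₀`.
-/

section Complements

variable {R M N P : Type*} [Ring R] [AddCommGroup M] [Module R M] [AddCommGroup N] [Module R N]
  [AddCommGroup P] [Module R P]

theorem isCompl_range_ker_of_bijective_comp {f : M →ₗ[R] N} {g : N →ₗ[R] P}
    (h : Function.Bijective (g ∘ₗ f)) : IsCompl (LinearMap.range f) (LinearMap.ker g) := by
  constructor
  · rw [Submodule.disjoint_def]
    rintro _ ⟨m, rfl⟩ hm
    have hm₀ : m = 0 := (map_eq_zero_iff (g ∘ₗ f) h.injective).1 hm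
    rw [hm₀, map_zero]
  · rw [Submodule.codisjoint_iff_exists_add_eq]
    intro n
    obtain ⟨m, hm : g (f m) = g n⟩ := h.surjective (g n)
    exact ⟨f m, n - f m, ⟨m, rfl⟩, by rw [LinearMap.mem_ker, map_sub, hm, sub_self],
      add_sub_cancel _ _⟩

theorem existsUnique_mem_and_add_mem_of_isCompl {p q : Submodule R M} (hpq : IsCompl p q) (v : M) :
    ∃! x, x ∈ p ∧ v + x ∈ q := by
  obtain ⟨x, y, hx, hy, rfl⟩ := Submodule.codisjoint_iff_exists_add_eq.1 hpq.codisjoint v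
  refine ⟨-x, ⟨p.neg_mem hx, by rwa [add_neg_cancel_comm]⟩, fun z ⟨hz, hyz⟩ ↦ ?_⟩
  have hxz : x + z ∈ q := by simpa only [add_right_comm x y z, q.add_mem_iff_left hy] using hyz
  exact eq_neg_of_add_eq_zero_right
    (Submodule.disjoint_def.1 hpq.disjoint _ (p.add_mem hx hz) hxz)

end Complements

section BilinearPairings

theorem ker_lcomp_subtype_comp {R M N : Type*} [CommSemiring R] [AddCommMonoid M] [Module R M]
    [AddCommMonoid N] [Module R N] (ω : N →ₗ[R] M →ₗ[R] R) (A : Submodule R M) :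
    LinearMap.ker (LinearMap.lcomp R R A.subtype ∘ₗ ω) = A.orthogonalBilin ω.flip := by
  ext n
  simp [LinearMap.ext_iff]

variable {K V W : Type*} [Field K] [AddCommGroup V] [Module K V] [AddCommGroup W] [Module K W]

theorem bijective_of_forall_apply_self_eq_zero [FiniteDimensional K V] {B : V →ₗ[K] V →ₗ[K] K}
    (hB : ∀ v, B v v = 0 → v = 0) : Function.Bijective B := by
  have hinj : Function.Injective B := (injective_iff_map_eq_zero B).2 fun v hv ↦
    hB v (by rw [hv, LinearMap.zero_apply])
  exact ⟨hinj, (LinearMap.injective_iff_surjective_of_finrank_eq_finrank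
    Subspace.dual_finrank_eq.symm).1 hinj⟩

theorem isCompl_map_orthogonalBilin_flip {ω : W →ₗ[K] V →ₗ[K] K} {S : V →ₗ[K] W}
    {A : Submodule K V} [FiniteDimensional K A] (hA : ∀ a ∈ A, ω (S a) a = 0 → a = 0) :
    IsCompl (A.map S) (A.orthogonalBilin ω.flip) := by
  rw [← LinearMap.range_domRestrict, ← ker_lcomp_subtype_comp]
  apply isCompl_range_ker_of_bijective_comp
  exact bijective_of_forall_apply_self_eq_zero fun a ha ↦ Subtype.ext (hA a a.2 ha)

theorem faddeev_vershik_unique_solution_general (ω : W →ₗ[K] V →ₗ[K] K) (S : V →ₗ[K] W)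
    (A : Submodule K V) [FiniteDimensional K A] (hdef : ∀ a ∈ A, ω (S a) a = 0 → S a = 0)
    (hA : Disjoint A (LinearMap.ker S)) (w₀ : W) :
    ∃! g : W, g ∈ A.map S ∧ w₀ + g ∈ A.orthogonalBilin ω.flip :=
  existsUnique_mem_and_add_mem_of_isCompl
    (isCompl_map_orthogonalBilin_flip fun a ha h ↦
      Submodule.disjoint_def.1 hA a ha (hdef a ha h)) w₀

end BilinearPairings

theorem sympOrth_eq_orthogonalBilin_flip {V : Type} [AddCommGroup V] [Module ℝ V]
    (ω : V →ₗ[ℝ] V →ₗ[ℝ] ℝ) (U : Submodule ℝ V) : sympOrth ω U = U.orthogonalBilin ω.flip :=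
  rfl

/-- Faddeev–Vershik theorem (linear-algebraic content): with `ω` nondegenerate
alternating, `S` satisfying `ω(Su,v) = −ω(u,Sv)` and `ω(Sv,v) > 0` whenever `Sv ≠ 0`,
and `A` with `A ∩ ker S = 0`, every `v₀` admits a unique `g ∈ S(A)` with
`v₀ + g ∈ A^⊥`. -/
theorem faddeev_vershik_unique_solution
    {V : Type} [AddCommGroup V] [Module ℝ V] [FiniteDimensional ℝ V]
    (ω : V →ₗ[ℝ] V →ₗ[ℝ] ℝ)
    (hω_nd : ∀ v : V, (∀ u : V, ω v u = 0) → v = 0)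
    (hω_alt : ∀ v : V, ω v v = 0)
    (S : V →ₗ[ℝ] V)
    (hS : ∀ u v : V, ω (S u) v = - ω u (S v))
    (hpos : ∀ v : V, S v ≠ 0 → 0 < ω (S v) v)
    (A : Submodule ℝ V)
    (hA : A ⊓ LinearMap.ker S = ⊥) :
    ∀ v₀ : V, ∃! g : V, g ∈ Submodule.map S A ∧ v₀ + g ∈ sympOrth ω A := by
  rw [sympOrth_eq_orthogonalBilin_flip]
  exact faddeev_vershik_unique_solution_general ω S A
    (fun v _ hv ↦ by_contra fun hSv ↦ (hpos v hSv).ne' hv) (disjoint_iff.2 hA)
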